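/- Let (N,V) be a triangle-free instance of 3D-SR-SAS-BIN. If (N,V) contains a repairable P-matching, then (N,V) contains a stable P-matching. -/

import Mathlib

open Finset

variable {A : Type*}

/-- `M` is a matching on agent set `N`: a set of pairwise disjoint triples of agents of `N`. -/
def IsMatching [DecidableEq A] (N : Finset A) (M : Finset (Finset A)) : Prop :=
  (∀ t ∈ M, t.card = 3 ∧ t ⊆ N) ∧ ∀ t ∈ M, ∀ s ∈ M, t ≠ s → Disjoint t s

/-- The (additively separable) utility of agent `a` in matching `M` under valuations `val`:
the sum, over the triples of `M` containing `a`, of the valuations by `a` of the other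
members; this is `0` if `a` is unmatched, and for a genuine matching it is the sum of the
valuations of `a`'s two partners. -/
def utility [DecidableEq A] (val : A → A → ℤ) (M : Finset (Finset A)) (a : A) : ℤ :=
  ∑ t ∈ M.filter (fun t => a ∈ t), ∑ b ∈ t.erase a, val a b

/-- The triple consisting of the three distinct agents `x, y, z` of `N` blocks `M`. -/
def Blocks [DecidableEq A] (N : Finset A) (val : A → A → ℤ) (M : Finset (Finset A))
    (x y z : A) : Prop :=
  x ∈ N ∧ y ∈ N ∧ z ∈ N ∧ x ≠ y ∧ x ≠ z ∧ y ≠ z ∧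
  utility val M x < val x y + val x z ∧
  utility val M y < val y x + val y z ∧
  utility val M z < val z x + val z y

/-- `M` is stable: no triple of agents of `N` blocks it. -/
def IsStable [DecidableEq A] (N : Finset A) (val : A → A → ℤ) (M : Finset (Finset A)) : Prop :=
  ∀ x y z : A, ¬ Blocks N val M x y z

/-- Binary symmetric preferences on `N`. -/
def BinSym [DecidableEq A] (N : Finset A) (val : A → A → ℤ) : Prop :=
  (∀ a ∈ N, ∀ b ∈ N, a ≠ b → val a b = 0 ∨ val a b = 1) ∧
  (∀ a ∈ N, ∀ b ∈ N, val a b = val b a)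

/-- A `P`-matching: a matching in which every matched agent has strictly positive utility. -/
def IsPMatching [DecidableEq A] (N : Finset A) (val : A → A → ℤ)
    (M : Finset (Finset A)) : Prop :=
  IsMatching N M ∧ ∀ a : A, (∃ t ∈ M, a ∈ t) → 0 < utility val M a

/-- `x, y, z` form a triangle: three distinct agents of `N` whose pairwise valuations
all equal `1`. -/
def IsTriangle [DecidableEq A] (N : Finset A) (val : A → A → ℤ) (x y z : A) : Prop :=
  x ∈ N ∧ y ∈ N ∧ z ∈ N ∧ x ≠ y ∧ x ≠ z ∧ y ≠ z ∧
  val x y = 1 ∧ val y z = 1 ∧ val x z = 1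

/-- The instance contains no triangle. -/
def TriangleFree [DecidableEq A] (N : Finset A) (val : A → A → ℤ) : Prop :=
  ∀ x y z : A, ¬ IsTriangle N val x y z

/-- `M` is a repairable `P`-matching: it is not stable, and there is an agent `i` of
utility `0` such that every blocking triple has the form `{i, j₁, j₂}` with
`u_{j₁}(M) = 1`, `u_{j₂}(M) = 0`, `val i j₁ = 1` and `val j₁ j₂ = 1`. -/
def Repairable [DecidableEq A] (N : Finset A) (val : A → A → ℤ)
    (M : Finset (Finset A)) : Prop :=
  ¬ IsStable N val M ∧
  ∃ i ∈ N, utility val M i = 0 ∧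
    ∀ x y z : A, Blocks N val M x y z →
      ∃ j1 j2 : A, ({x, y, z} : Finset A) = {i, j1, j2} ∧
        utility val M j1 = 1 ∧ utility val M j2 = 0 ∧ val i j1 = 1 ∧ val j1 j2 = 1

/-!
Mutual liking is a triangle-free graph, and a triple that blocks a `P`-matching or belongs to one
spans an induced path `a b c`. A matched path gives its ends utility `1` and its centre utility `2`,
so a path blocks exactly when its ends are unmatched and its centre has utility at most `1`.

Add the agents one at a time. A `P`-matching that is stable without `i` can only be blocked by
triples containing the unmatched agent `i`. If one of them is centred at `i`, or has no matched
member, adding it to the matching lowers no utility and restores stability. Otherwise take a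
blocking path `i j k`, where `j` is an end of a matched path `j c d`. If `c` likes an unmatched
agent `a`, replacing `j c d` by `i j k` and `a c d` again restores stability. If it likes none,
slide the triple to `i j c`: now `d` is the only agent that can obstruct stability. The slide makes
`j` a centre that likes the unmatched agent `k`, while the lost centre `c` liked no unmatched agent,
so the slides come to an end.
-/

/-- The graph on all agents in which two distinct agents of `N` are adjacent when they value each
other at `1`. -/
def likeGraph (N : Finset A) (val : A → A → ℤ) : SimpleGraph A where
  Adj a b := a ≠ b ∧ a ∈ N ∧ b ∈ N ∧ val a b = 1 ∧ val b a = 1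
  symm := ⟨fun _ _ h => ⟨h.1.symm, h.2.2.1, h.2.1, h.2.2.2.2, h.2.2.2.1⟩⟩
  loopless := ⟨fun _ h => h.1 rfl⟩

/-- The agents `a, b, c` form an induced path of the like graph with centre `b`. That `a` and `c`
are not adjacent is recorded through their valuations, from which utilities are computed. -/
structure IsInducedPath (N : Finset A) (val : A → A → ℤ) (a b c : A) : Prop where
  adj_left : (likeGraph N val).Adj a b
  adj_right : (likeGraph N val).Adj b c
  ne : a ≠ c
  val_ends : val a c = 0 ∧ val c a = 0

lemma IsInducedPath.symm {N : Finset A} {val : A → A → ℤ} {a b c : A}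
    (h : IsInducedPath N val a b c) : IsInducedPath N val c b a :=
  ⟨h.adj_right.symm, h.adj_left.symm, h.ne.symm, h.val_ends.symm⟩

section

variable [DecidableEq A] {N N' : Finset A} {val : A → A → ℤ} {M M' : Finset (Finset A)}
  {a b c d i j k x y z : A} {t : Finset A}

lemma BinSym.mono (hbs : BinSym N' val) (h : N ⊆ N') : BinSym N val :=
  ⟨fun a ha b hb => hbs.1 a (h ha) b (h hb), fun a ha b hb => hbs.2 a (h ha) b (h hb)⟩

lemma TriangleFree.mono (htf : TriangleFree N' val) (h : N ⊆ N') : TriangleFree N val :=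
  fun x y z ⟨hx, hy, hz, hxyz⟩ => htf x y z ⟨h hx, h hy, h hz, hxyz⟩

lemma BinSym.adj_or_val_eq_zero (hbs : BinSym N val) (ha : a ∈ N) (hb : b ∈ N) (hab : a ≠ b) :
    (likeGraph N val).Adj a b ∨ val a b = 0 ∧ val b a = 0 := by
  have hsymm := hbs.2 a ha b hb
  rcases hbs.1 a ha b hb hab with h | h
  · exact .inr ⟨h, hsymm ▸ h⟩
  · exact .inl ⟨hab, ha, hb, h, hsymm ▸ h⟩

lemma TriangleFree.not_adj (htf : TriangleFree N val) (hab : (likeGraph N val).Adj a b)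
    (hbc : (likeGraph N val).Adj b c) : ¬ (likeGraph N val).Adj a c :=
  fun hac => htf a b c ⟨hab.2.1, hab.2.2.1, hbc.2.2.1, hab.1, hac.1, hbc.1, hab.2.2.2.1,
    hbc.2.2.2.1, hac.2.2.2.1⟩

lemma TriangleFree.isInducedPath (hbs : BinSym N val) (htf : TriangleFree N val)
    (hab : (likeGraph N val).Adj a b) (hbc : (likeGraph N val).Adj b c) (hac : a ≠ c) :
    IsInducedPath N val a b c :=
  ⟨hab, hbc, hac, (hbs.adj_or_val_eq_zero hab.2.1 hbc.2.2.1 hac).resolve_left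
    (htf.not_adj hab hbc)⟩

lemma TriangleFree.isInducedPath_of_pos (hbs : BinSym N val) (htf : TriangleFree N val)
    (hx : x ∈ N) (hy : y ∈ N) (hz : z ∈ N) (hxy : x ≠ y) (hxz : x ≠ z) (hyz : y ≠ z)
    (hxpos : 0 < val x y + val x z) (hypos : 0 < val y x + val y z)
    (hzpos : 0 < val z x + val z y) :
    IsInducedPath N val x y z ∨ IsInducedPath N val y z x ∨ IsInducedPath N val z x y := by
  rcases hbs.adj_or_val_eq_zero hx hy hxy with hxy' | hxy' <;>
    rcases hbs.adj_or_val_eq_zero hy hz hyz with hyz' | hyz'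
  · exact .inl (htf.isInducedPath hbs hxy' hyz' hxz)
  · have hxz' := (hbs.adj_or_val_eq_zero hx hz hxz).resolve_right (by omega)
    exact .inr (.inr (htf.isInducedPath hbs hxz'.symm hxy' hyz.symm))
  · have hxz' := (hbs.adj_or_val_eq_zero hx hz hxz).resolve_right (by omega)
    exact .inr (.inl (htf.isInducedPath hbs hyz' hxz'.symm hxy.symm))
  · omega

lemma utility_eq_zero_of_forall_notMem (h : ∀ t ∈ M, a ∉ t) : utility val M a = 0 := by
  rw [utility, filter_false_of_mem h, sum_empty]

namespace IsMatching

lemma eq_of_mem_of_mem (hM : IsMatching N M) {s : Finset A} (hs : s ∈ M) (ht : t ∈ M)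
    (has : a ∈ s) (hat : a ∈ t) : s = t := by
  by_contra hne
  exact disjoint_left.1 (hM.2 s hs t ht hne) has hat

lemma mono (hM : IsMatching N M) (h : N ⊆ N') : IsMatching N' M :=
  ⟨fun t ht => ⟨(hM.1 t ht).1, (hM.1 t ht).2.trans h⟩, hM.2⟩

lemma erase (hM : IsMatching N M) (t : Finset A) : IsMatching N (M.erase t) :=
  ⟨fun s hs => hM.1 s (mem_of_mem_erase hs),
    fun s hs r hr => hM.2 s (mem_of_mem_erase hs) r (mem_of_mem_erase hr)⟩

protected lemma insert (hM : IsMatching N M) (hcard : #t = 3) (htN : t ⊆ N)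
    (hdisj : ∀ s ∈ M, Disjoint t s) : IsMatching N (insert t M) := by
  refine ⟨(forall_mem_insert _ _ _).2 ⟨⟨hcard, htN⟩, hM.1⟩, fun s hs r hr hsr => ?_⟩
  rcases mem_insert.1 hs with hst | hs <;> rcases mem_insert.1 hr with hrt | hr
  · exact absurd (hst.trans hrt.symm) hsr
  · exact hst ▸ hdisj r hr
  · exact hrt ▸ (hdisj s hs).symm
  · exact hM.2 s hs r hr hsr

lemma utility_eq_add (hM : IsMatching N M) (hab : a ≠ b) (hac : a ≠ c) (hbc : b ≠ c)
    (ht : {a, b, c} ∈ M) : utility val M a = val a b + val a c := by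
  have hfilter : {s ∈ M | a ∈ s} = {{a, b, c}} := by
    ext s
    simp only [mem_filter, mem_singleton]
    exact ⟨fun h => hM.eq_of_mem_of_mem h.1 ht h.2 (by simp), fun h => by simp [h, ht]⟩
  rw [utility, hfilter, sum_singleton, erase_insert (by simp [hab, hac]), sum_pair hbc]

lemma utility_left (hM : IsMatching N M) (hp : IsInducedPath N val a b c)
    (ht : {a, b, c} ∈ M) : utility val M a = 1 := by
  rw [hM.utility_eq_add hp.adj_left.ne hp.ne hp.adj_right.ne ht, hp.adj_left.2.2.2.1,
    hp.val_ends.1, add_zero]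

lemma utility_centre (hM : IsMatching N M) (hp : IsInducedPath N val a b c)
    (ht : {a, b, c} ∈ M) : utility val M b = 2 := by
  rw [hM.utility_eq_add hp.adj_left.ne' hp.adj_right.ne hp.ne (insert_comm a b {c} ▸ ht),
    hp.adj_left.2.2.2.2, hp.adj_right.2.2.2.1, one_add_one_eq_two]

lemma utility_right (hM : IsMatching N M) (hp : IsInducedPath N val a b c)
    (ht : {a, b, c} ∈ M) : utility val M c = 1 :=
  hM.utility_left hp.symm (by rwa [pair_comm, insert_comm, pair_comm])

lemma utility_erase (hM : IsMatching N M) (ht : t ∈ M) (v : A) :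
    utility val (M.erase t) v = if v ∈ t then 0 else utility val M v := by
  split_ifs with hv
  · refine utility_eq_zero_of_forall_notMem fun s hs hvs => ?_
    exact ne_of_mem_erase hs (hM.eq_of_mem_of_mem (mem_of_mem_erase hs) ht hvs hv)
  · rw [utility, utility, filter_erase, erase_eq_of_notMem (by simp [hv])]

end IsMatching

namespace IsPMatching

lemma mono (hM : IsPMatching N val M) (h : N ⊆ N') : IsPMatching N' val M :=
  ⟨hM.1.mono h, hM.2⟩

lemma notMem_of_utility_eq_zero (hM : IsPMatching N val M) (h : utility val M a = 0)
    (ht : t ∈ M) : a ∉ t :=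
  fun hat => (hM.2 a ⟨t, ht, hat⟩).ne' h

lemma utility_nonneg (hM : IsPMatching N val M) (a : A) : 0 ≤ utility val M a := by
  by_cases h : ∃ t ∈ M, a ∈ t
  · exact (hM.2 a h).le
  · push Not at h
    exact (utility_eq_zero_of_forall_notMem h).ge

lemma exists_isInducedPath_of_mem (hbs : BinSym N val) (htf : TriangleFree N val)
    (hM : IsPMatching N val M) (ht : t ∈ M) :
    ∃ a b c, IsInducedPath N val a b c ∧ t = {a, b, c} := by
  obtain ⟨hcard, hsub⟩ := hM.1.1 t ht
  obtain ⟨x, y, z, hxy, hxz, hyz, rfl⟩ := card_eq_three.1 hcard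
  have hyxz : {y, x, z} = ({x, y, z} : Finset A) := insert_comm y x {z}
  have hzxy : {z, x, y} = ({x, y, z} : Finset A) := by rw [insert_comm, pair_comm]
  have hyzx : {y, z, x} = ({x, y, z} : Finset A) := by rw [pair_comm, hyxz]
  have hx := hM.1.utility_eq_add (val := val) hxy hxz hyz ht
  have hy := hM.1.utility_eq_add (val := val) hxy.symm hyz hxz (hyxz ▸ ht)
  have hz := hM.1.utility_eq_add (val := val) hxz.symm hyz.symm hxy (hzxy ▸ ht)
  rcases htf.isInducedPath_of_pos hbs (hsub (by simp)) (hsub (by simp)) (hsub (by simp))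
    hxy hxz hyz (hx ▸ hM.2 x ⟨_, ht, by simp⟩) (hy ▸ hM.2 y ⟨_, ht, by simp⟩)
    (hz ▸ hM.2 z ⟨_, ht, by simp⟩) with h | h | h
  · exact ⟨x, y, z, h, rfl⟩
  · exact ⟨y, z, x, h, hyzx.symm⟩
  · exact ⟨z, x, y, h, hzxy.symm⟩

lemma exists_isInducedPath_of_utility_eq_one (hbs : BinSym N val) (htf : TriangleFree N val)
    (hM : IsPMatching N val M) (ha : utility val M a = 1) :
    ∃ b c, IsInducedPath N val a b c ∧ {a, b, c} ∈ M := by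
  obtain ⟨t, ht, hat⟩ : ∃ t ∈ M, a ∈ t := by
    by_contra! h
    simp [utility_eq_zero_of_forall_notMem h] at ha
  obtain ⟨x, y, z, hp, rfl⟩ := hM.exists_isInducedPath_of_mem hbs htf ht
  have hy := hM.1.utility_centre hp ht
  obtain rfl | rfl | rfl : a = x ∨ a = y ∨ a = z := by simpa using hat
  · exact ⟨y, z, hp, ht⟩
  · omega
  · exact ⟨y, x, hp.symm, by rwa [pair_comm, insert_comm, pair_comm]⟩

lemma erase (hM : IsPMatching N val M) (ht : t ∈ M) : IsPMatching N val (M.erase t) := by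
  refine ⟨hM.1.erase t, fun v ⟨s, hs, hvs⟩ => ?_⟩
  have hs' := mem_of_mem_erase hs
  rw [hM.1.utility_erase ht,
    if_neg fun hvt => ne_of_mem_erase hs (hM.1.eq_of_mem_of_mem hs' ht hvs hvt)]
  exact hM.2 v ⟨s, hs', hvs⟩

lemma isMatching_insert (hM : IsPMatching N val M) (hp : IsInducedPath N val a b c)
    (ha : utility val M a = 0) (hb : utility val M b = 0) (hc : utility val M c = 0) :
    IsMatching N (insert {a, b, c} M) := by
  refine hM.1.insert (card_eq_three.2 ⟨a, b, c, hp.adj_left.ne, hp.ne, hp.adj_right.ne, rfl⟩)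
    ?_ fun s hs => ?_
  · simp [insert_subset_iff, hp.adj_left.2.1, hp.adj_right.2.1, hp.adj_right.2.2.1]
  · simp [hM.notMem_of_utility_eq_zero ha hs, hM.notMem_of_utility_eq_zero hb hs,
      hM.notMem_of_utility_eq_zero hc hs]

lemma utility_insert (hM : IsPMatching N val M) (hp : IsInducedPath N val a b c)
    (ha : utility val M a = 0) (hb : utility val M b = 0) (hc : utility val M c = 0) (v : A) :
    utility val (insert {a, b, c} M) v =
      if v = b then 2 else if v = a ∨ v = c then 1 else utility val M v := by
  have hmat := hM.isMatching_insert hp ha hb hc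
  have ht := mem_insert_self {a, b, c} M
  split_ifs with hvb hvac
  · exact hvb ▸ hmat.utility_centre hp ht
  · rcases hvac with rfl | rfl
    · exact hmat.utility_left hp ht
    · exact hmat.utility_right hp ht
  · rw [utility, utility, filter_insert, if_neg (by simp_all)]

protected lemma insert (hM : IsPMatching N val M) (hp : IsInducedPath N val a b c)
    (ha : utility val M a = 0) (hb : utility val M b = 0) (hc : utility val M c = 0) :
    IsPMatching N val (insert {a, b, c} M) := by
  refine ⟨hM.isMatching_insert hp ha hb hc, fun v ⟨t, ht, hvt⟩ => ?_⟩
  rw [hM.utility_insert hp ha hb hc]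
  split_ifs with hvb hvac
  · exact two_pos
  · exact one_pos
  · refine hM.2 v ⟨t, (mem_insert.1 ht).resolve_left ?_, hvt⟩
    rintro rfl
    simp_all

end IsPMatching

/-- The induced path `a, b, c` blocks `M`, expressed through utilities alone: its ends are unmatched
and its centre has not yet reached utility `2`. -/
structure IsBlockingPath (N : Finset A) (val : A → A → ℤ) (M : Finset (Finset A))
    (a b c : A) : Prop where
  path : IsInducedPath N val a b c
  left : utility val M a = 0
  centre : utility val M b ≤ 1
  right : utility val M c = 0

lemma IsBlockingPath.symm (h : IsBlockingPath N val M a b c) : IsBlockingPath N val M c b a :=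
  ⟨h.path.symm, h.right, h.centre, h.left⟩

lemma IsBlockingPath.blocks (h : IsBlockingPath N val M a b c) : Blocks N val M a b c := by
  obtain ⟨⟨⟨hab, ha, hb, vab, vba⟩, ⟨hbc, -, hc, vbc, vcb⟩, hac, vac, vca⟩, ua, ub, uc⟩ := h
  exact ⟨ha, hb, hc, hab, hac, hbc, by omega, by omega, by omega⟩

lemma IsBlockingPath.mono (hM : IsPMatching N val M)
    (hle : ∀ v, utility val M v ≤ utility val M' v) (h : IsBlockingPath N val M' a b c) :
    IsBlockingPath N val M a b c :=
  ⟨h.path, (h.left ▸ hle a).antisymm (hM.utility_nonneg a), (hle b).trans h.centre,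
    (h.right ▸ hle c).antisymm (hM.utility_nonneg c)⟩

lemma Blocks.isBlockingPath (hbs : BinSym N val) (htf : TriangleFree N val)
    (hM : IsPMatching N val M) (h : Blocks N val M x y z) :
    IsBlockingPath N val M x y z ∨ IsBlockingPath N val M y z x ∨
      IsBlockingPath N val M z x y := by
  obtain ⟨hx, hy, hz, hxy, hxz, hyz, ux, uy, uz⟩ := h
  have hx0 := hM.utility_nonneg x
  have hy0 := hM.utility_nonneg y
  have hz0 := hM.utility_nonneg z
  refine (htf.isInducedPath_of_pos hbs hx hy hz hxy hxz hyz (hx0.trans_lt ux) (hy0.trans_lt uy)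
    (hz0.trans_lt uz)).imp (fun hp => ?_) (.imp (fun hp => ?_) fun hp => ?_) <;>
  · have ⟨⟨_, _, _, vab, vba⟩, ⟨_, _, _, vbc, vcb⟩, _, vac, vca⟩ := hp
    exact ⟨hp, by omega, by omega, by omega⟩

/-- The unmatched agent `i` belongs to every triple that blocks `M`; no such triple need exist. -/
structure IsSoleObstruction (N : Finset A) (val : A → A → ℤ) (M : Finset (Finset A))
    (i : A) : Prop where
  utility_eq_zero : utility val M i = 0
  eq_of_blocks : ∀ ⦃x y z⦄, Blocks N val M x y z → i = x ∨ i = y ∨ i = z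

lemma IsSoleObstruction.of_isBlockingPath (hbs : BinSym N val) (htf : TriangleFree N val)
    (hM : IsPMatching N val M) (hi : utility val M i = 0)
    (h : ∀ a b c, IsBlockingPath N val M a b c → i = a ∨ i = b ∨ i = c) :
    IsSoleObstruction N val M i := by
  refine ⟨hi, fun x y z hxyz => ?_⟩
  rcases hxyz.isBlockingPath hbs htf hM with hp | hp | hp <;>
  · have := h _ _ _ hp
    tauto

namespace IsSoleObstruction

lemma isStable_of_le (hbs : BinSym N val) (htf : TriangleFree N val)
    (hi : IsSoleObstruction N val M i) (hM : IsPMatching N val M) (hM' : IsPMatching N val M')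
    (hle : ∀ v, utility val M v ≤ utility val M' v) (hpos : 0 < utility val M' i)
    (hcentre : ∀ a c, ¬ IsBlockingPath N val M' a i c) : IsStable N val M' := by
  have hno (a b c) (hp : IsBlockingPath N val M' a b c) : False := by
    rcases hi.eq_of_blocks (hp.mono hM hle).blocks with rfl | rfl | rfl
    · exact hpos.ne' hp.left
    · exact hcentre a c hp
    · exact hpos.ne' hp.right
  intro x y z hxyz
  rcases hxyz.isBlockingPath hbs htf hM' with hp | hp | hp <;> exact hno _ _ _ hp

lemma exists_isBlockingPath (hbs : BinSym N val) (htf : TriangleFree N val)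
    (hi : IsSoleObstruction N val M i) (hM : IsPMatching N val M)
    (hcentre : ∀ a c, ¬ IsBlockingPath N val M a i c) (hst : ¬ IsStable N val M) :
    ∃ j k, IsBlockingPath N val M i j k := by
  obtain ⟨a, b, c, hp⟩ : ∃ a b c, IsBlockingPath N val M a b c := by
    simp only [IsStable, not_forall, not_not] at hst
    obtain ⟨x, y, z, hxyz⟩ := hst
    rcases hxyz.isBlockingPath hbs htf hM with hp | hp | hp <;> exact ⟨_, _, _, hp⟩
  rcases hi.eq_of_blocks hp.blocks with rfl | rfl | rfl
  · exact ⟨b, c, hp⟩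
  · exact absurd hp (hcentre a c)
  · exact ⟨b, a, hp.symm⟩

lemma isStable_insert_of_centre (hbs : BinSym N val) (htf : TriangleFree N val)
    (hi : IsSoleObstruction N val M i) (hM : IsPMatching N val M)
    (hp : IsBlockingPath N val M a i c) : IsStable N val (insert {a, i, c} M) := by
  have hu := hM.utility_insert hp.path hp.left hi.utility_eq_zero hp.right
  have hui : utility val (insert {a, i, c} M) i = 2 := by simp [hu]
  refine hi.isStable_of_le hbs htf hM (hM.insert hp.path hp.left hi.utility_eq_zero hp.right)
    (fun v => ?_) (by omega) fun _ _ hq => ?_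
  · grind [hp.left, hp.right, hi.utility_eq_zero]
  · have := hq.centre
    omega

lemma isStable_insert_of_end (hbs : BinSym N val) (htf : TriangleFree N val)
    (hi : IsSoleObstruction N val M i) (hM : IsPMatching N val M)
    (hcentre : ∀ a c, ¬ IsBlockingPath N val M a i c)
    (hp : IsBlockingPath N val M i j k) (hj : utility val M j = 0) :
    IsStable N val (insert {i, j, k} M) := by
  have hu := hM.utility_insert hp.path hp.left hj hp.right
  have hle (v) : utility val M v ≤ utility val (insert {i, j, k} M) v := by
    grind [hp.left, hp.right]
  refine hi.isStable_of_le hbs htf hM (hM.insert hp.path hp.left hj hp.right) hle ?_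
    fun a c hq => hcentre a c (hq.mono hM hle)
  simp [hu, hp.path.adj_left.ne]

end IsSoleObstruction

/-- The family obtained from `M` by sliding the triple `{j, c, d}` along the path `i, j, c, d` to
`{i, j, c}`, which leaves `d` unmatched. -/
def slide (M : Finset (Finset A)) (i j c d : A) : Finset (Finset A) :=
  insert {i, j, c} (M.erase {j, c, d})

namespace IsPMatching

protected lemma slide (hM : IsPMatching N val M) (hi : utility val M i = 0)
    (hp : IsInducedPath N val i j c) (ht : {j, c, d} ∈ M) :
    IsPMatching N val (slide M i j c d) := by
  have hu := hM.1.utility_erase (val := val) ht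
  exact (hM.erase ht).insert hp (by simp [hu, hi]) (by simp [hu]) (by simp [hu])

lemma utility_slide (hM : IsPMatching N val M) (hi : utility val M i = 0)
    (hp : IsInducedPath N val i j c) (ht : {j, c, d} ∈ M) (v : A) :
    utility val (slide M i j c d) v =
      if v = j then 2 else if v = i ∨ v = c then 1 else if v = d then 0 else utility val M v := by
  have hu := hM.1.utility_erase (val := val) ht
  rw [slide, (hM.erase ht).utility_insert hp (by simp [hu, hi]) (by simp [hu]) (by simp [hu]), hu]
  grind

end IsPMatching

namespace IsSoleObstruction

lemma exists_isStable_of_adj (hbs : BinSym N val) (htf : TriangleFree N val)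
    (hi : IsSoleObstruction N val M i) (hM : IsPMatching N val M)
    (hcentre : ∀ a c, ¬ IsBlockingPath N val M a i c) (hp : IsBlockingPath N val M i j k)
    (hq : IsInducedPath N val j c d) (ht : {j, c, d} ∈ M) (hac : (likeGraph N val).Adj a c)
    (ha : utility val M a = 0) : ∃ M', IsPMatching N val M' ∧ IsStable N val M' := by
  have hj := hM.1.utility_left hq ht
  have hc := hM.1.utility_centre hq ht
  have hd := hM.1.utility_right hq ht
  have hk := hp.right
  have hi0 := hp.left
  have hai : a ≠ i := by
    rintro rfl
    exact htf.not_adj hp.path.adj_left hq.adj_left hac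
  have hak : a ≠ k := by
    rintro rfl
    exact htf.not_adj hp.path.adj_right.symm hq.adj_left hac
  have hjd := hq.ne
  have hr : IsInducedPath N val a c d := htf.isInducedPath hbs hac hq.adj_right (by grind)
  obtain ⟨E, hE, huE⟩ : ∃ E, IsPMatching N val E ∧
      ∀ v, utility val E v = if v = j ∨ v = c ∨ v = d then 0 else utility val M v :=
    ⟨_, hM.erase ht, by simpa using hM.1.utility_erase (val := val) ht⟩
  obtain ⟨F, hF, huF⟩ : ∃ F, IsPMatching N val F ∧
      ∀ v, utility val F v = if v = j then 2 else if v = i ∨ v = k then 1 else utility val E v :=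
    have hEi : utility val E i = 0 := by simp [huE, hi0]
    have hEj : utility val E j = 0 := by simp [huE]
    have hEk : utility val E k = 0 := by simp [huE, hk]
    ⟨_, hE.insert hp.path hEi hEj hEk, hE.utility_insert hp.path hEi hEj hEk⟩
  have hFi : utility val F i = 1 := by simp [huF, hp.path.adj_left.ne]
  have hFa : utility val F a = 0 := by grind
  have hFc : utility val F c = 0 := by grind
  have hFd : utility val F d = 0 := by grind
  have hG := hF.insert hr hFa hFc hFd
  have huG := hF.utility_insert hr hFa hFc hFd
  have hle (v : A) : utility val M v ≤ utility val (insert {a, c, d} F) v := by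
    rw [huG, huF, huE]
    split_ifs <;> grind
  exact ⟨_, hG, hi.isStable_of_le hbs htf hM hG hle (by grind)
    fun _ _ h => hcentre _ _ (h.mono hM hle)⟩

protected lemma slide (hbs : BinSym N val) (htf : TriangleFree N val)
    (hi : IsSoleObstruction N val M i) (hM : IsPMatching N val M)
    (hcentre : ∀ a c, ¬ IsBlockingPath N val M a i c)
    (hp : IsInducedPath N val i j c) (hq : IsInducedPath N val j c d) (ht : {j, c, d} ∈ M)
    (hno : ∀ a, (likeGraph N val).Adj a c → utility val M a ≠ 0) :
    IsSoleObstruction N val (slide M i j c d) d := by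
  have hu := hM.utility_slide hi.utility_eq_zero hp ht
  have hc := hM.1.utility_centre hq ht
  have hd := hM.1.utility_right hq ht
  have hjd := hq.ne
  have hi0 := hi.utility_eq_zero
  refine .of_isBlockingPath hbs htf (hM.slide hi.utility_eq_zero hp ht)
    (by grind) fun x y z hr => ?_
  by_contra! hne
  obtain ⟨hxyz, hx, hy, hz⟩ := hr
  have hx' : utility val M x = 0 := by grind
  have hz' : utility val M z = 0 := by grind
  have hyc : y ≠ c := by
    rintro rfl
    exact hno x hxyz.adj_left hx'
  have hyi : y ≠ i := by
    rintro rfl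
    exact hcentre x z ⟨hxyz, hx', by grind, hz'⟩
  rcases hi.eq_of_blocks (IsBlockingPath.blocks ⟨hxyz, hx', by grind, hz'⟩) with rfl | rfl | rfl
  · grind
  · exact hyi rfl
  · grind

end IsSoleObstruction

open scoped Classical in
/-- The potential that grows with each slide: the agents of utility `2` that like an unmatched agent
other than `i`. The obstruction `i` itself is left out because the slide matches it. -/
noncomputable def likingCentres (N : Finset A) (val : A → A → ℤ) (M : Finset (Finset A))
    (i : A) : Finset A :=
  {v ∈ N | utility val M v = 2 ∧ ∃ w, w ≠ i ∧ utility val M w = 0 ∧ (likeGraph N val).Adj v w}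

lemma mem_likingCentres {v : A} : v ∈ likingCentres N val M i ↔ v ∈ N ∧ utility val M v = 2 ∧
    ∃ w, w ≠ i ∧ utility val M w = 0 ∧ (likeGraph N val).Adj v w := by
  simp [likingCentres]

lemma likingCentres_subset : likingCentres N val M i ⊆ N :=
  fun _ hv => (mem_likingCentres.1 hv).1

lemma likingCentres_ssubset_slide (hM : IsPMatching N val M) (hp : IsBlockingPath N val M i j k)
    (hpc : IsInducedPath N val i j c) (hq : IsInducedPath N val j c d) (ht : {j, c, d} ∈ M)
    (hno : ∀ a, (likeGraph N val).Adj a c → utility val M a ≠ 0) :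
    likingCentres N val M i ⊂ likingCentres N val (slide M i j c d) d := by
  have hu := hM.utility_slide hp.left hpc ht
  have hj := hM.1.utility_left hq ht
  have hc := hM.1.utility_centre hq ht
  have hd := hM.1.utility_right hq ht
  have hi := hp.left
  have hk := hp.right
  refine (ssubset_iff_of_subset fun v hv => ?_).2 ⟨j, ?_, ?_⟩
  · obtain ⟨hvN, hv2, w, hwi, hw, hvw⟩ := mem_likingCentres.1 hv
    have hvc : v ≠ c := by
      rintro rfl
      exact hno w hvw.symm hw
    have hvi : v ≠ i := by grind
    have hvd : v ≠ d := by grind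
    have hwj : w ≠ j := by grind
    have hwc : w ≠ c := by grind
    exact mem_likingCentres.2 ⟨hvN, by grind, w, by grind, by grind, hvw⟩
  · exact mem_likingCentres.2 ⟨hp.path.adj_left.2.2.1, by grind, k, by grind,
      by grind [hp.path.ne], hp.path.adj_right⟩
  · intro h
    have := (mem_likingCentres.1 h).2.1
    omega

lemma IsSoleObstruction.exists_isStable_or_ssubset (hbs : BinSym N val) (htf : TriangleFree N val)
    (hi : IsSoleObstruction N val M i) (hM : IsPMatching N val M) :
    (∃ M', IsPMatching N val M' ∧ IsStable N val M') ∨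
      ∃ M' d, IsPMatching N val M' ∧ IsSoleObstruction N val M' d ∧
        likingCentres N val M i ⊂ likingCentres N val M' d := by
  by_cases hst : IsStable N val M
  · exact .inl ⟨M, hM, hst⟩
  by_cases hcentre : ∃ a c, IsBlockingPath N val M a i c
  · obtain ⟨a, c, hp⟩ := hcentre
    exact .inl ⟨_, hM.insert hp.path hp.left hi.utility_eq_zero hp.right,
      hi.isStable_insert_of_centre hbs htf hM hp⟩
  push Not at hcentre
  obtain ⟨j, k, hp⟩ := hi.exists_isBlockingPath hbs htf hM hcentre hst
  obtain hj | hj : utility val M j = 0 ∨ utility val M j = 1 := by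
    have := hp.centre
    have := hM.utility_nonneg j
    omega
  · exact .inl ⟨_, hM.insert hp.path hp.left hj hp.right,
      hi.isStable_insert_of_end hbs htf hM hcentre hp hj⟩
  obtain ⟨c, d, hq, ht⟩ := hM.exists_isInducedPath_of_utility_eq_one hbs htf hj
  by_cases hc : ∃ a, (likeGraph N val).Adj a c ∧ utility val M a = 0
  · obtain ⟨a, hac, ha⟩ := hc
    exact .inl (hi.exists_isStable_of_adj hbs htf hM hcentre hp hq ht hac ha)
  push Not at hc
  have hic : i ≠ c := by
    rintro rfl
    simpa [hp.left] using hM.1.utility_centre hq ht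
  have hpc := htf.isInducedPath hbs hp.path.adj_left hq.adj_left hic
  exact .inr ⟨_, d, hM.slide hp.left hpc ht, hi.slide hbs htf hM hcentre hpc hq ht hc,
    likingCentres_ssubset_slide hM hp hpc hq ht hc⟩

lemma IsSoleObstruction.exists_isStable (hbs : BinSym N val) (htf : TriangleFree N val)
    (hi : IsSoleObstruction N val M i) (hM : IsPMatching N val M) :
    ∃ M', IsPMatching N val M' ∧ IsStable N val M' := by
  induction hn : #N - #(likingCentres N val M i) using Nat.strong_induction_on
    generalizing M i with
  | _ n ih =>
    rcases hi.exists_isStable_or_ssubset hbs htf hM with h | ⟨M', d, hM', hd, hlt⟩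
    · exact h
    · have hcard := card_lt_card hlt
      have hle : #(likingCentres N val M' d) ≤ #N := card_le_card likingCentres_subset
      exact ih _ (by omega) hd hM' rfl

lemma IsPMatching.isSoleObstruction_insert (hM : IsPMatching N val M) (hst : IsStable N val M)
    (hi : i ∉ N) : IsSoleObstruction (insert i N) val M i := by
  refine ⟨utility_eq_zero_of_forall_notMem fun t ht hit => hi ((hM.1.1 t ht).2 hit),
    fun x y z ⟨hx, hy, hz, h⟩ => ?_⟩
  by_contra! hne
  exact hst x y z ⟨mem_of_mem_insert_of_ne hx hne.1.symm,
    mem_of_mem_insert_of_ne hy hne.2.1.symm, mem_of_mem_insert_of_ne hz hne.2.2.symm, h⟩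

end

theorem stable_pmatching_of_repairable_general [DecidableEq A] (N : Finset A) (val : A → A → ℤ)
    (hbs : BinSym N val) (htf : TriangleFree N val) :
    ∃ M, IsPMatching N val M ∧ IsStable N val M := by
  induction N using Finset.induction_on with
  | empty => exact ⟨∅, by simp [IsPMatching, IsMatching], by simp [IsStable, Blocks]⟩
  | insert i N hiN ih =>
    have hsub := subset_insert i N
    obtain ⟨M, hM, hst⟩ := ih (hbs.mono hsub) (htf.mono hsub)
    exact (hM.isSoleObstruction_insert hst hiN).exists_isStable hbs htf (hM.mono hsub)

/-- If a triangle-free binary symmetric instance contains a repairable `P`-matching,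
then it contains a stable `P`-matching. -/
theorem stable_pmatching_of_repairable [DecidableEq A]
    (N : Finset A) (val : A → A → ℤ)
    (hbs : BinSym N val) (htf : TriangleFree N val)
    (h : ∃ M, IsPMatching N val M ∧ Repairable N val M) :
    ∃ M', IsPMatching N val M' ∧ IsStable N val M' :=
  stable_pmatching_of_repairable_general N val hbs htf
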